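/- Let a, b, c, d, p be real constants, P(x) = (x−a)(x−b)(x−c)(x−d), and let U ⊆ ℝ³ be a nonempty open set on which λ¹ > λ² > λ³ > 0, 1 + p√(λ¹λ²λ³) > 0, and on which the functions H₁² = (1+p√(λ¹λ²λ³))⁻²(λ¹−λ²)(λ¹−λ³)/P(λ¹), H₂² = (1+p√(λ¹λ²λ³))⁻²(λ²−λ¹)(λ²−λ³)/P(λ²), H₃² = (1+p√(λ¹λ²λ³))⁻²(λ³−λ¹)(λ³−λ²)/P(λ³) are positive, with Hᵢ denoting their positive square roots. Then: (1) the off-diagonal Lamé equations ∂ⱼ∂ₖHᵢ − Hⱼ⁻¹(∂ⱼHᵢ)(∂ₖHⱼ) − Hₖ⁻¹(∂ₖHᵢ)(∂ⱼHₖ) = 0 hold on U for every permutation (i,j,k) of (1,2,3); and (2) the diagonal Lamé equations ∂ᵢ(Hᵢ⁻¹∂ᵢHⱼ) + ∂ⱼ(Hⱼ⁻¹∂ⱼHᵢ) + Hₖ⁻²(∂ₖHᵢ)(∂ₖHⱼ) = 0 hold on U for every permutation (i,j,k) of (1,2,3) if and only if p·abcd = 0 and p²(abc + abd + acd + bcd)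 = 1. -/

import Mathlib

/-- The partial derivative of `f : ℝ³ → ℝ` in the `i`-th coordinate direction,
taken as a line (directional) derivative. -/
noncomputable def pd (i : Fin 3) (f : (Fin 3 → ℝ) → ℝ) (x : Fin 3 → ℝ) : ℝ :=
  lineDeriv ℝ f x (Pi.single i 1)

open Real in
lemma cyc_sqrt_deriv (u v w : ℝ) (hu : 0 < u) (hv : 0 < v) (hw : 0 < w) :
    HasDerivAt (fun t : ℝ => √(u * (v + t) * w)) (√(u * v * w) / (2 * v)) 0 := by
  have h : HasDerivAt (fun t : ℝ => u * (v + t) * w) (u * 1 * w) 0 :=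
    (((hasDerivAt_id' (0 : ℝ)).const_add v).const_mul u).mul_const w
  have hpos : 0 < u * v * w := by positivity
  have h2 := h.sqrt (by simp only [add_zero]; exact hpos.ne')
  convert h2 using 1
  simp only [add_zero]
  have hs : 0 < √(u * v * w) := Real.sqrt_pos.2 hpos
  have hss : √(u * v * w) ^ 2 = u * v * w := Real.sq_sqrt hpos.le
  field_simp
  rw [hss]

/-- derivative of `p s / (2 v W)` type terms: `∂ (s / W)`. -/
lemma cyc_sW_deriv (u v w p : ℝ) (hu : 0 < u) (hv : 0 < v) (hw : 0 < w)
    (hW : 0 < 1 + p * √(u * v * w)) :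
    HasDerivAt (fun t : ℝ => √(u * (v + t) * w) / (1 + p * √(u * (v + t) * w)))
      (√(u * v * w) / (2 * v * (1 + p * √(u * v * w)) ^ 2)) 0 := by
  have h := cyc_sqrt_deriv u v w hu hv hw
  have h2 := h.div ((h.const_mul p).const_add 1) (by simp only [add_zero]; exact hW.ne')
  refine HasDerivAt.congr_deriv h2 ?_
  try simp only [add_zero]
  field_simp
  ring

lemma cyc_sqrt_log (f : ℝ → ℝ) (g : ℝ) (hf : HasDerivAt f (2 * g * f 0) 0) (h0 : 0 < f 0) :
    HasDerivAt (fun t => √(f t)) (g * √(f 0)) 0 := by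
  convert hf.sqrt h0.ne' using 1
  have hs : 0 < √(f 0) := Real.sqrt_pos.2 h0
  have hss : √(f 0) ^ 2 = f 0 := Real.sq_sqrt h0.le
  field_simp
  rw [hss]

/-- derivative of `H2 i` (general numerator/denominator) -/
lemma cyc_H2_deriv (u v w p : ℝ) (hu : 0 < u) (hv : 0 < v) (hw : 0 < w)
    (hW : 0 < 1 + p * √(u * v * w)) (N Q : ℝ → ℝ) (N' Q' : ℝ)
    (hN : HasDerivAt N N' 0) (hQ : HasDerivAt Q Q' 0) (hN0 : N 0 ≠ 0) (hQ0 : Q 0 ≠ 0) :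
    HasDerivAt (fun t : ℝ => ((1 + p * √(u * (v + t) * w)) ^ 2)⁻¹ * N t / Q t)
      (2 * (N' / (2 * N 0) - Q' / (2 * Q 0)
        - p * √(u * v * w) / (2 * v * (1 + p * √(u * v * w)))) *
        (((1 + p * √(u * v * w)) ^ 2)⁻¹ * N 0 / Q 0)) 0 := by
  have h := cyc_sqrt_deriv u v w hu hv hw
  have h2 := (((((h.const_mul p).const_add 1).pow 2).inv
    (by simpa using hW.ne')).mul hN).div hQ hQ0
  refine HasDerivAt.congr_deriv h2 ?_
  try simp only [add_zero, Pi.pow_apply, Pi.inv_apply, Pi.mul_apply]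
  have := hW.ne'
  generalize √(u * v * w) = s at *
  field_simp
  ring

lemma cyc_line (i j : Fin 3) (l : Fin 3 → ℝ) (t : ℝ) :
    (l + t • (Pi.single j 1 : Fin 3 → ℝ)) i = if i = j then l i + t else l i := by
  by_cases h : i = j
  · subst h; simp
  · simp [h]

/-- algebraic identity behind the off-diagonal equations -/
lemma cyc_off (x y z s p W : ℝ) (hx : x ≠ 0) (hy : y ≠ 0) (hz : z ≠ 0)
    (hxy : x - y ≠ 0) (hxz : x - z ≠ 0) (hyz : y - z ≠ 0) (hW : W ≠ 0) (hWe : W = 1 + p * s) :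
    -(p * (s / (2 * y * W ^ 2)) / (2 * z))
      + (1 / (2 * (z - x)) - p * s / (2 * z * W)) * (1 / (2 * (y - x)) - p * s / (2 * y * W))
      - (1 / (2 * (y - x)) - p * s / (2 * y * W)) * (1 / (2 * (z - y)) - p * s / (2 * z * W))
      - (1 / (2 * (z - x)) - p * s / (2 * z * W)) * (1 / (2 * (y - z)) - p * s / (2 * y * W))
      = 0 := by
  have h1 : z - x ≠ 0 := fun h => hxz (by linarith)
  have h2 : y - x ≠ 0 := fun h => hxy (by linarith)
  have h3 : z - y ≠ 0 := fun h => hyz (by linarith)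
  have h4 : p * s = W - 1 := by linarith
  have h5 : p * (s / (2 * y * W ^ 2)) = (W - 1) / (2 * y * W ^ 2) := by rw [← h4]; ring
  rw [h5, h4]
  field_simp
  ring

/-- algebraic identity behind the diagonal equations -/
lemma cyc_diag (a b c d x y z s p W : ℝ) (P : ℝ → ℝ)
    (hP : ∀ x, P x = (x - a) * (x - b) * (x - c) * (x - d))
    (dP : ℝ → ℝ) (hdP : ∀ x, dP x = (x - b) * (x - c) * (x - d) + (x - a) * (x - c) * (x - d)
      + (x - a) * (x - b) * (x - d) + (x - a) * (x - b) * (x - c))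
    (hx : x ≠ 0) (hy : y ≠ 0) (hz : z ≠ 0) (hs : s ≠ 0) (hss : s ^ 2 = x * y * z)
    (hxy : x - y ≠ 0) (hxz : x - z ≠ 0) (hyz : y - z ≠ 0) (hW : W ≠ 0) (hWe : W = 1 + p * s)
    (hPx : P x ≠ 0) (hPy : P y ≠ 0) :
    W ^ 2 * P x / ((x - y) * (x - z)) *
      ((-(1 / (2 * (x - y) ^ 2)) + p * s * (W + p * s) / (4 * x ^ 2 * W ^ 2))
        + (1 / (2 * (x - y)) - p * s / (2 * x * W)) * ((1 / (2 * (x - y)) - p * s / (2 * x * W))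
          - (1 / (2 * (x - y)) + 1 / (2 * (x - z)) - dP x / (2 * P x) - p * s / (2 * x * W))))
    + W ^ 2 * P y / ((y - x) * (y - z)) *
      ((-(1 / (2 * (y - x) ^ 2)) + p * s * (W + p * s) / (4 * y ^ 2 * W ^ 2))
        + (1 / (2 * (y - x)) - p * s / (2 * y * W)) * ((1 / (2 * (y - x)) - p * s / (2 * y * W))
          - (1 / (2 * (y - x)) + 1 / (2 * (y - z)) - dP y / (2 * P y) - p * s / (2 * y * W))))
    + W ^ 2 * P z / ((z - x) * (z - y)) *
      ((1 / (2 * (z - x)) - p * s / (2 * z * W)) * (1 / (2 * (z - y)) - p * s / (2 * z * W)))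
    = (1 - p ^ 2 * (a * b * c + a * b * d + a * c * d + b * c * d)) / 4
      + p * (a * b * c * d) / 4 * (W / s * (1 / x + 1 / y) + p * (1 / x + 1 / y + 1 / z)) := by
  have h1 : z - x ≠ 0 := fun h => hxz (by linarith)
  have h2 : y - x ≠ 0 := fun h => hxy (by linarith)
  have h3 : z - y ≠ 0 := fun h => hyz (by linarith)
  have e : ∀ q A B r C D : ℝ, q ≠ 0 → ∀ m n, W ^ 2 * q / m * (A + B * (C - (D - r / (2 * q) - n)))
      = W ^ 2 / m * (q * (A + B * (C - D + n)) + B * r / 2) := by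
    intro q A B r C D hq m n
    field_simp
    ring
  rw [e _ _ _ _ _ _ hPx, e _ _ _ _ _ _ hPy]
  have hps : p * s = W - 1 := by linarith
  have hp2 : p ^ 2 = (W - 1) ^ 2 / (x * y * z) := by rw [← hps, ← hss]; field_simp
  have hpW : p * (W / s) = (W - 1) * W / (x * y * z) := by rw [← hps, ← hss]; field_simp
  have hr : (1 - p ^ 2 * (a * b * c + a * b * d + a * c * d + b * c * d)) / 4
      + p * (a * b * c * d) / 4 * (W / s * (1 / x + 1 / y) + p * (1 / x + 1 / y + 1 / z))
      = (1 - p ^ 2 * (a * b * c + a * b * d + a * c * d + b * c * d)) / 4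
      + (a * b * c * d) / 4 * (p * (W / s) * (1 / x + 1 / y) + p ^ 2 * (1 / x + 1 / y + 1 / z)) := by
    ring
  rw [hr, hpW, hp2]
  simp only [hps]
  clear hr hpW hp2 hps hss hWe hs e
  obtain ⟨M1, hM1⟩ : ∃ q, q =
      (W ^ 2 / ((x - y) * (x - z)) * (-(1 / (2 * (x - y) ^ 2)) + (W - 1) * (W + (W - 1)) / (4 * x ^ 2 * W ^ 2) +
      (1 / (2 * (x - y)) - (W - 1) / (2 * x * W)) *
        (1 / (2 * (x - y)) - (W - 1) / (2 * x * W) - (1 / (2 * (x - y)) + 1 / (2 * (x - z))) +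
          (W - 1) / (2 * x * W)))) := ⟨_, rfl⟩
  obtain ⟨R1, hR1⟩ : ∃ q, q =
      (W ^ 2 / ((x - y) * (x - z)) * (1 / (2 * (x - y)) - (W - 1) / (2 * x * W)) / 2) := ⟨_, rfl⟩
  obtain ⟨M2, hM2⟩ : ∃ q, q =
      (W ^ 2 / ((y - x) * (y - z)) * (-(1 / (2 * (y - x) ^ 2)) + (W - 1) * (W + (W - 1)) / (4 * y ^ 2 * W ^ 2) +
      (1 / (2 * (y - x)) - (W - 1) / (2 * y * W)) *
        (1 / (2 * (y - x)) - (W - 1) / (2 * y * W) - (1 / (2 * (y - x)) + 1 / (2 * (y - z))) +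
          (W - 1) / (2 * y * W)))) := ⟨_, rfl⟩
  obtain ⟨R2, hR2⟩ : ∃ q, q =
      (W ^ 2 / ((y - x) * (y - z)) * (1 / (2 * (y - x)) - (W - 1) / (2 * y * W)) / 2) := ⟨_, rfl⟩
  obtain ⟨M3, hM3⟩ : ∃ q, q =
      (W ^ 2 / ((z - x) * (z - y)) *
      ((1 / (2 * (z - x)) - (W - 1) / (2 * z * W)) * (1 / (2 * (z - y)) - (W - 1) / (2 * z * W)))) := ⟨_, rfl⟩
  have I0 : M1 * 1 + R1 * 0 + M2 * 1 + R2 * 0 + M3 * 1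
      = ((W - 1) * W / (x * y * z) * (1 / x + 1 / y) + (W - 1) ^ 2 / (x * y * z) * (1 / x + 1 / y + 1 / z)) / 4 := by
    rw [hM1, hR1, hM2, hR2, hM3]
    field_simp
    ring
  have I1 : M1 * x + R1 * 1 + M2 * y + R2 * 1 + M3 * z
      = (W - 1) ^ 2 / (x * y * z) / 4 := by
    rw [hM1, hR1, hM2, hR2, hM3]
    field_simp
    ring
  have I2 : M1 * x ^ 2 + R1 * (2 * x) + M2 * y ^ 2 + R2 * (2 * y) + M3 * z ^ 2
      = 0 := by
    rw [hM1, hR1, hM2, hR2, hM3]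
    field_simp
    ring
  have I3 : M1 * x ^ 3 + R1 * (3 * x ^ 2) + M2 * y ^ 3 + R2 * (3 * y ^ 2) + M3 * z ^ 3
      = 0 := by
    rw [hM1, hR1, hM2, hR2, hM3]
    field_simp
    ring
  have I4 : M1 * x ^ 4 + R1 * (4 * x ^ 3) + M2 * y ^ 4 + R2 * (4 * y ^ 3) + M3 * z ^ 4
      = 1 / 4 := by
    rw [hM1, hR1, hM2, hR2, hM3]
    field_simp
    ring
  have hL : ∀ q1 r1 q2 r2 q3 X : ℝ, M1 * q1 + R1 * r1 + M2 * q2 + R2 * r2 + M3 * q3 = X →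
      W ^ 2 / ((x - y) * (x - z)) *
          (q1 *
              (-(1 / (2 * (x - y) ^ 2)) + (W - 1) * (W + (W - 1)) / (4 * x ^ 2 * W ^ 2) +
                (1 / (2 * (x - y)) - (W - 1) / (2 * x * W)) *
                  (1 / (2 * (x - y)) - (W - 1) / (2 * x * W) - (1 / (2 * (x - y)) + 1 / (2 * (x - z))) +
                    (W - 1) / (2 * x * W))) +
            (1 / (2 * (x - y)) - (W - 1) / (2 * x * W)) * r1 / 2) +
        W ^ 2 / ((y - x) * (y - z)) *
          (q2 *
              (-(1 / (2 * (y - x) ^ 2)) + (W - 1) * (W + (W - 1)) / (4 * y ^ 2 * W ^ 2) +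
                (1 / (2 * (y - x)) - (W - 1) / (2 * y * W)) *
                  (1 / (2 * (y - x)) - (W - 1) / (2 * y * W) - (1 / (2 * (y - x)) + 1 / (2 * (y - z))) +
                    (W - 1) / (2 * y * W))) +
            (1 / (2 * (y - x)) - (W - 1) / (2 * y * W)) * r2 / 2) +
      W ^ 2 * q3 / ((z - x) * (z - y)) *
        ((1 / (2 * (z - x)) - (W - 1) / (2 * z * W)) * (1 / (2 * (z - y)) - (W - 1) / (2 * z * W))) = X := by
    intro q1 r1 q2 r2 q3 X h
    rw [← h, hM1, hR1, hM2, hR2, hM3]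
    ring
  apply hL
  simp only [hP, hdP]
  clear hL hM1 hR1 hM2 hR2 hM3
  linear_combination I4 - (a + b + c + d) * I3 + (a * b + a * c + a * d + b * c + b * d + c * d) * I2
    - (a * b * c + a * b * d + a * c * d + b * c * d) * I1 + a * b * c * d * I0


/-- **Lamé equations for Darboux's cyclidic metric (Proposition 3).** With
`P(x) = (x-a)(x-b)(x-c)(x-d)`, `W = 1 + p√(λ¹λ²λ³)` and
`Hᵢ² = W⁻² ∏_{j≠i}(λⁱ-λʲ)/P(λⁱ)` (positive on the nonempty open set `U`, with `Hᵢ` the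
positive square roots): (1) the off-diagonal Lamé equations hold on `U` for every
permutation `(i,j,k)` of `(1,2,3)`; (2) the diagonal Lamé equations hold on `U` for
every permutation if and only if `p·abcd = 0` and `p²(abc+abd+acd+bcd) = 1`. -/
theorem cyclidic_lame_equations (a b c d p : ℝ)
    (P : ℝ → ℝ) (hP : ∀ x, P x = (x - a) * (x - b) * (x - c) * (x - d))
    (U : Set (Fin 3 → ℝ)) (hUo : IsOpen U) (hUne : U.Nonempty)
    (hord : ∀ l ∈ U, 0 < l 2 ∧ l 2 < l 1 ∧ l 1 < l 0)
    (W : (Fin 3 → ℝ) → ℝ) (hW : ∀ l, W l = 1 + p * Real.sqrt (l 0 * l 1 * l 2))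
    (hWpos : ∀ l ∈ U, 0 < W l)
    (H2 : Fin 3 → (Fin 3 → ℝ) → ℝ)
    (hH2 : ∀ i l,
      H2 i l = (W l ^ 2)⁻¹ * (∏ j ∈ Finset.univ.erase i, (l i - l j)) / P (l i))
    (hH2pos : ∀ i, ∀ l ∈ U, 0 < H2 i l)
    (H : Fin 3 → (Fin 3 → ℝ) → ℝ) (hH : ∀ i l, H i l = Real.sqrt (H2 i l)) :
    (∀ i j k : Fin 3, i ≠ j → j ≠ k → i ≠ k → ∀ l ∈ U,
        pd j (pd k (H i)) l - (H j l)⁻¹ * pd j (H i) l * pd k (H j) l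
          - (H k l)⁻¹ * pd k (H i) l * pd j (H k) l = 0) ∧
    ((∀ i j k : Fin 3, i ≠ j → j ≠ k → i ≠ k → ∀ l ∈ U,
        pd i (fun w => (H i w)⁻¹ * pd i (H j) w) l
          + pd j (fun w => (H j w)⁻¹ * pd j (H i) w) l
          + (H k l ^ 2)⁻¹ * pd k (H i) l * pd k (H j) l = 0) ↔
      (p * (a * b * c * d) = 0 ∧
        p ^ 2 * (a * b * c + a * b * d + a * c * d + b * c * d) = 1)) := by
  obtain ⟨S, hS⟩ : ∃ S : (Fin 3 → ℝ) → ℝ, ∀ l, S l = √(l 0 * l 1 * l 2) := ⟨_, fun _ => rfl⟩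
  have hSp : ∀ i j k : Fin 3, i ≠ j → j ≠ k → i ≠ k → ∀ l, S l = √(l i * l j * l k) := by
    intro i j k hij hjk hik l
    rw [hS]
    congr 1
    fin_cases i <;> fin_cases j <;> fin_cases k <;> first | exact absurd rfl hij | exact absurd rfl hjk | exact absurd rfl hik | (dsimp; done) | (dsimp; ring)
  have hWS : ∀ l, W l = 1 + p * S l := fun l => by rw [hW, hS]
  have hH2p : ∀ i j k : Fin 3, i ≠ j → j ≠ k → i ≠ k → ∀ l,
      H2 i l = (W l ^ 2)⁻¹ * ((l i - l j) * (l i - l k)) / P (l i) := by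
    intro i j k hij hjk hik l
    have he : Finset.univ.erase i = {j, k} := by
      revert i j k; decide
    rw [hH2, he, Finset.prod_pair hjk]
  have hpos : ∀ l ∈ U, ∀ i, 0 < l i := by
    intro l hl i
    obtain ⟨h1, h2, h3⟩ := hord l hl
    fin_cases i <;> simp <;> linarith
  have hne : ∀ l ∈ U, ∀ i j, i ≠ j → l i - l j ≠ 0 := by
    intro l hl i j hij
    obtain ⟨h1, h2, h3⟩ := hord l hl
    fin_cases i <;> fin_cases j <;> simp at hij ⊢ <;> intro h <;> linarith
  have hPne : ∀ l ∈ U, ∀ i, P (l i) ≠ 0 := by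
    intro l hl i h
    have := hH2pos i l hl
    rw [hH2, h] at this
    simp at this
  have hSpos : ∀ l ∈ U, 0 < S l := by
    intro l hl
    rw [hS]
    have := hpos l hl 0
    have := hpos l hl 1
    have := hpos l hl 2
    positivity
  have hHpos : ∀ i, ∀ l ∈ U, 0 < H i l := by
    intro i l hl
    rw [hH]
    exact Real.sqrt_pos.2 (hH2pos i l hl)
  have hHsq : ∀ i, ∀ l ∈ U, H i l ^ 2 = H2 i l := by
    intro i l hl
    rw [hH]
    exact Real.sq_sqrt (hH2pos i l hl).le
  obtain ⟨dP, hdP⟩ : ∃ dP : ℝ → ℝ, ∀ x, dP x = (x - b) * (x - c) * (x - d)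
      + (x - a) * (x - c) * (x - d)
      + (x - a) * (x - b) * (x - d) + (x - a) * (x - b) * (x - c) := ⟨_, fun _ => rfl⟩
  have hPd : ∀ x, HasDerivAt (fun t => P (x + t)) (dP x) 0 := by
    intro x
    have hl : ∀ q : ℝ, HasDerivAt (fun t : ℝ => x + t - q) 1 0 := fun q =>
      ((hasDerivAt_id' (0 : ℝ)).const_add x).sub_const q
    simp only [hP]
    refine ((((hl a).mul (hl b)).mul (hl c)).mul (hl d)).congr_deriv ?_
    simp [hdP]
    ring
  -- first derivatives
  obtain ⟨go, hgo⟩ : ∃ go : Fin 3 → Fin 3 → (Fin 3 → ℝ) → ℝ, ∀ i j l,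
      go i j l = 1 / (2 * (l j - l i)) - p * S l / (2 * l j * W l) := ⟨_, fun _ _ _ => rfl⟩
  obtain ⟨gd, hgd⟩ : ∃ gd : Fin 3 → Fin 3 → Fin 3 → (Fin 3 → ℝ) → ℝ, ∀ i j k l,
      gd i j k l = 1 / (2 * (l i - l j)) + 1 / (2 * (l i - l k)) - dP (l i) / (2 * P (l i))
        - p * S l / (2 * l i * W l) := ⟨_, fun _ _ _ _ => rfl⟩
  have G1 : ∀ i j k : Fin 3, i ≠ j → j ≠ k → i ≠ k → ∀ l ∈ U,
      HasLineDerivAt ℝ (H i) (go i j l * H i l) l (Pi.single j 1) := by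
    intro i j k hij hjk hik l hl
    have hWl := hWpos l hl
    rw [hWS, hSp i j k hij hjk hik] at hWl
    have e1 := hne l hl i j hij
    have e2 := hne l hl i k hik
    have e3 : l j - l i ≠ 0 := hne l hl j i hij.symm
    have hN : HasDerivAt (fun t : ℝ => (l i - (l j + t)) * (l i - l k)) (-1 * (l i - l k)) 0 :=
      (((hasDerivAt_id' (0 : ℝ)).const_add (l j)).const_sub (l i)).mul_const _
    have key := cyc_H2_deriv (l i) (l j) (l k) p (hpos l hl i) (hpos l hl j) (hpos l hl k) hWl
      _ (fun _ => P (l i)) _ 0 hN (hasDerivAt_const _ _) (by simp [e1, e2]) (hPne l hl i)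
    have hfun : ∀ t : ℝ, H2 i (l + t • (Pi.single j 1 : Fin 3 → ℝ)) =
        ((1 + p * √(l i * (l j + t) * l k)) ^ 2)⁻¹ * ((l i - (l j + t)) * (l i - l k)) / P (l i) := by
      intro t
      rw [hH2p i j k hij hjk hik, hWS, hSp i j k hij hjk hik]
      simp only [cyc_line, hij, hjk.symm, hik, if_true, if_false]
    have h0 : l + (0 : ℝ) • (Pi.single j 1 : Fin 3 → ℝ) = l := by simp
    have := cyc_sqrt_log (fun t : ℝ => H2 i (l + t • (Pi.single j 1 : Fin 3 → ℝ))) (go i j l) (by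
      simp only [hfun]
      refine key.congr_deriv ?_
      rw [hgo, hWS, hSp i j k hij hjk hik]
      simp only [add_zero]
      have hq : -1 * (l i - l k) / (2 * ((l i - l j) * (l i - l k))) = 1 / (2 * (l j - l i)) := by
        field_simp
        ring
      rw [hq]
      ring) (by simp only [h0]; exact hH2pos i l hl)
    simp only [h0] at this
    unfold HasLineDerivAt
    simpa only [hH] using this
  have G2 : ∀ i j k : Fin 3, i ≠ j → j ≠ k → i ≠ k → ∀ l ∈ U,
      HasLineDerivAt ℝ (H i) (gd i j k l * H i l) l (Pi.single i 1) := by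
    intro i j k hij hjk hik l hl
    have hWl := hWpos l hl
    rw [hWS, hSp j i k hij.symm hik hjk] at hWl
    have e1 := hne l hl i j hij
    have e2 := hne l hl i k hik
    have hb : ∀ q : ℝ, HasDerivAt (fun t : ℝ => l i + t - q) 1 0 := fun q =>
      ((hasDerivAt_id' (0 : ℝ)).const_add (l i)).sub_const q
    have hN : HasDerivAt (fun t : ℝ => (l i + t - l j) * (l i + t - l k))
        (1 * (l i + 0 - l k) + (l i + 0 - l j) * 1) 0 := (hb _).mul (hb _)
    have key := cyc_H2_deriv (l j) (l i) (l k) p (hpos l hl j) (hpos l hl i) (hpos l hl k) hWl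
      _ (fun t => P (l i + t)) _ _ hN (hPd (l i)) (by simp [e1, e2]) (by simpa using hPne l hl i)
    have hfun : ∀ t : ℝ, H2 i (l + t • (Pi.single i 1 : Fin 3 → ℝ)) =
        ((1 + p * √(l j * (l i + t) * l k)) ^ 2)⁻¹ * ((l i + t - l j) * (l i + t - l k))
          / P (l i + t) := by
      intro t
      rw [hH2p i j k hij hjk hik, hWS, hSp j i k hij.symm hik hjk]
      simp only [cyc_line, hij.symm, hik.symm, if_true, if_false]
    have h0 : l + (0 : ℝ) • (Pi.single i 1 : Fin 3 → ℝ) = l := by simp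
    have := cyc_sqrt_log (fun t : ℝ => H2 i (l + t • (Pi.single i 1 : Fin 3 → ℝ))) (gd i j k l) (by
      simp only [hfun]
      refine key.congr_deriv ?_
      rw [hgd, hWS, hSp j i k hij.symm hik hjk]
      simp only [add_zero]
      have hq : (1 * (l i - l k) + (l i - l j) * 1) / (2 * ((l i - l j) * (l i - l k)))
          = 1 / (2 * (l i - l j)) + 1 / (2 * (l i - l k)) := by
        field_simp
      rw [hq]) (by simp only [h0]; exact hH2pos i l hl)
    simp only [h0] at this
    unfold HasLineDerivAt
    simpa only [hH] using this
  -- derivatives of the logarithmic derivatives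
  have G3 : ∀ i j k : Fin 3, i ≠ j → j ≠ k → i ≠ k → ∀ l ∈ U,
      HasLineDerivAt ℝ (go i k) (-(p * (S l / (2 * l j * W l ^ 2)) / (2 * l k))) l
        (Pi.single j 1) := by
    intro i j k hij hjk hik l hl
    have hWl := hWpos l hl
    rw [hWS, hSp i j k hij hjk hik] at hWl
    have key := ((cyc_sW_deriv (l i) (l j) (l k) p (hpos l hl i) (hpos l hl j) (hpos l hl k)
      hWl).const_mul (p / (2 * l k))).const_sub (1 / (2 * (l k - l i)))
    have hfun : ∀ t : ℝ, go i k (l + t • (Pi.single j 1 : Fin 3 → ℝ)) =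
        1 / (2 * (l k - l i)) - p / (2 * l k) *
          (√(l i * (l j + t) * l k) / (1 + p * √(l i * (l j + t) * l k))) := by
      intro t
      rw [hgo, hWS, hSp i j k hij hjk hik]
      simp only [cyc_line, hij, hjk.symm, if_true, if_false]
      rw [div_mul_div_comm]
    unfold HasLineDerivAt
    simp only [hfun]
    refine key.congr_deriv ?_
    rw [hWS, hSp i j k hij hjk hik]
    ring
  have G4 : ∀ i j k : Fin 3, i ≠ j → j ≠ k → i ≠ k → ∀ l ∈ U,
      HasLineDerivAt ℝ (go j i) (-(1 / (2 * (l i - l j) ^ 2))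
        + p * S l * (W l + p * S l) / (4 * l i ^ 2 * W l ^ 2)) l (Pi.single i 1) := by
    intro i j k hij hjk hik l hl
    have hWl := hWpos l hl
    rw [hWS, hSp j i k hij.symm hik hjk] at hWl
    have e1 := hne l hl i j hij
    have e0 := hpos l hl i
    have d1 : HasDerivAt (fun t : ℝ => (2 * (l i + t - l j))⁻¹) _ 0 :=
      ((((hasDerivAt_id' (0 : ℝ)).const_add (l i)).sub_const (l j)).const_mul 2).inv
        (by simpa using e1)
    have d2 : HasDerivAt (fun t : ℝ => p / 2 * (l i + t)⁻¹) _ 0 :=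
      (((hasDerivAt_id' (0 : ℝ)).const_add (l i)).inv (by simpa using e0.ne')).const_mul (p / 2)
    have key := d1.sub (d2.mul (cyc_sW_deriv (l j) (l i) (l k) p (hpos l hl j) (hpos l hl i)
      (hpos l hl k) hWl))
    have hfun : ∀ t : ℝ, go j i (l + t • (Pi.single i 1 : Fin 3 → ℝ)) =
        (2 * (l i + t - l j))⁻¹ - p / 2 * (l i + t)⁻¹ *
          (√(l j * (l i + t) * l k) / (1 + p * √(l j * (l i + t) * l k))) := by
      intro t
      rw [hgo, hWS, hSp j i k hij.symm hik hjk]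
      simp only [cyc_line, hij.symm, hik.symm, if_true, if_false]
      simp only [div_eq_mul_inv, mul_inv]
      ring
    unfold HasLineDerivAt
    simp only [hfun]
    refine HasDerivAt.congr_deriv key ?_
    rw [hWS, hSp j i k hij.symm hik hjk]
    simp only [add_zero]
    generalize √(l j * l i * l k) = s at *
    field_simp
    ring
  have third : ∀ i j : Fin 3, i ≠ j → ∃ k, j ≠ k ∧ i ≠ k := by decide
  have pdH : ∀ i j : Fin 3, i ≠ j → ∀ l ∈ U, pd j (H i) l = go i j l * H i l := by
    intro i j hij l hl
    obtain ⟨k, hjk, hik⟩ := third i j hij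
    exact (G1 i j k hij hjk hik l hl).lineDeriv
  have h00 : ∀ (l : Fin 3 → ℝ) j, l + (0 : ℝ) • (Pi.single j 1 : Fin 3 → ℝ) = l := by simp
  constructor
  · intro i j k hij hjk hik l hl
    have e : pd k (H i) =ᶠ[nhds l] fun w => go i k w * H i w := by
      filter_upwards [hUo.mem_nhds hl] with w hw using pdH i k hik w hw
    have e2 : pd j (pd k (H i)) l = -(p * (S l / (2 * l j * W l ^ 2)) / (2 * l k)) * H i l
        + go i k l * (go i j l * H i l) := by
      have := HasDerivAt.mul (G3 i j k hij hjk hik l hl) (G1 i j k hij hjk hik l hl)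
      rw [show pd j (pd k (H i)) l = pd j (fun w => go i k w * H i w) l from e.lineDeriv_eq]
      simp only [h00] at this
      exact HasLineDerivAt.lineDeriv this
    rw [e2, pdH i j hij l hl, pdH j k hjk l hl, pdH i k hik l hl, pdH k j hjk.symm l hl]
    have a1 := hHpos j l hl
    have a2 := hHpos k l hl
    have alg := cyc_off (l i) (l j) (l k) (S l) p (W l) (hpos l hl i).ne' (hpos l hl j).ne'
      (hpos l hl k).ne' (hne l hl i j hij) (hne l hl i k hik) (hne l hl j k hjk)
      (hWpos l hl).ne' (hWS l)
    rw [← hgo, ← hgo, ← hgo, ← hgo] at alg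
    have c1 : (H j l)⁻¹ * (go i j l * H i l) * (go j k l * H j l) = go i j l * go j k l * H i l := by
      field_simp
    have c2 : (H k l)⁻¹ * (go i k l * H i l) * (go k j l * H k l) = go i k l * go k j l * H i l := by
      field_simp
    rw [c1, c2]
    linear_combination H i l * alg
  · have half : ∀ i j k : Fin 3, i ≠ j → j ≠ k → i ≠ k → ∀ l ∈ U,
        pd i (fun w => (H i w)⁻¹ * pd i (H j) w) l = H i l * H j l *
          (W l ^ 2 * P (l i) / ((l i - l j) * (l i - l k)) *
            ((-(1 / (2 * (l i - l j) ^ 2))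
              + p * S l * (W l + p * S l) / (4 * l i ^ 2 * W l ^ 2))
              + go j i l * (go j i l - gd i j k l))) := by
      intro i j k hij hjk hik l hl
      have e : (fun w => (H i w)⁻¹ * pd i (H j) w) =ᶠ[nhds l]
          fun w => (H i w)⁻¹ * (go j i w * H j w) := by
        filter_upwards [hUo.mem_nhds hl] with w hw
        rw [pdH j i hij.symm w hw]
      have a1 := hHpos i l hl
      have this := HasDerivAt.mul
        (HasDerivAt.inv (G2 i j k hij hjk hik l hl) (by rw [h00]; exact a1.ne'))
        (HasDerivAt.mul (G4 i j k hij hjk hik l hl)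
          (G1 j i k hij.symm hik hjk l hl))
      rw [show pd i (fun w => (H i w)⁻¹ * pd i (H j) w) l
        = pd i (fun w => (H i w)⁻¹ * (go j i w * H j w)) l from e.lineDeriv_eq]
      simp only [h00, Pi.mul_apply, Pi.inv_apply] at this
      have this2 : HasLineDerivAt ℝ (fun w => (H i w)⁻¹ * (go j i w * H j w)) _ l
        (Pi.single i 1) := this
      refine this2.lineDeriv.trans ?_
      have hinv : W l ^ 2 * P (l i) / ((l i - l j) * (l i - l k)) = (H i l ^ 2)⁻¹ := by
        rw [hHsq i l hl, hH2p i j k hij hjk hik]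
        simp only [div_eq_mul_inv, mul_inv, inv_inv]
        ring
      rw [hinv]
      generalize (-(1 / (2 * (l i - l j) ^ 2))
              + p * S l * (W l + p * S l) / (4 * l i ^ 2 * W l ^ 2)) = D
      field_simp
      ring
    have main : ∀ i j k : Fin 3, i ≠ j → j ≠ k → i ≠ k → ∀ l ∈ U,
        pd i (fun w => (H i w)⁻¹ * pd i (H j) w) l
          + pd j (fun w => (H j w)⁻¹ * pd j (H i) w) l
          + (H k l ^ 2)⁻¹ * pd k (H i) l * pd k (H j) l = H i l * H j l *
          ((1 - p ^ 2 * (a * b * c + a * b * d + a * c * d + b * c * d)) / 4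
            + p * (a * b * c * d) / 4 * (W l / S l * (1 / l i + 1 / l j)
              + p * (1 / l i + 1 / l j + 1 / l k))) := by
      intro i j k hij hjk hik l hl
      rw [half i j k hij hjk hik l hl, half j i k hij.symm hik hjk l hl, pdH i k hik l hl,
        pdH j k hjk l hl]
      have hss : S l ^ 2 = l i * l j * l k := by
        have := hpos l hl i
        have := hpos l hl j
        have := hpos l hl k
        rw [hSp i j k hij hjk hik, Real.sq_sqrt (by positivity)]
      have hinv : (H k l ^ 2)⁻¹ = W l ^ 2 * P (l k) / ((l k - l i) * (l k - l j)) := by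
        rw [hHsq k l hl, hH2p k i j hik.symm hij hjk.symm]
        simp only [div_eq_mul_inv, mul_inv, inv_inv]
        ring
      have alg := cyc_diag a b c d (l i) (l j) (l k) (S l) p (W l) P hP dP hdP
        (hpos l hl i).ne' (hpos l hl j).ne' (hpos l hl k).ne' (hSpos l hl).ne' hss
        (hne l hl i j hij) (hne l hl i k hik) (hne l hl j k hjk)
        (hWpos l hl).ne' (hWS l) (hPne l hl i) (hPne l hl j)
      rw [← alg, hinv, hgo, hgo, hgo, hgo, hgd, hgd]
      ring
    constructor
    · intro h
      obtain ⟨l, hl⟩ := hUne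
      have q1 := h 0 1 2 (by decide) (by decide) (by decide) l hl
      have q2 := h 0 2 1 (by decide) (by decide) (by decide) l hl
      rw [main 0 1 2 (by decide) (by decide) (by decide) l hl] at q1
      rw [main 0 2 1 (by decide) (by decide) (by decide) l hl] at q2
      have a0 := (hHpos 0 l hl).ne'
      have a1 := (hHpos 1 l hl).ne'
      have a2 := (hHpos 2 l hl).ne'
      have q1' := (mul_eq_zero.1 q1).resolve_left (mul_ne_zero a0 a1)
      have q2' := (mul_eq_zero.1 q2).resolve_left (mul_ne_zero a0 a2)
      have hw := (hWpos l hl).ne'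
      have hs := (hSpos l hl).ne'
      have l1 := (hpos l hl 1).ne'
      have l2 := (hpos l hl 2).ne'
      have hd : 1 / l 1 - 1 / l 2 ≠ 0 := by
        have := hne l hl 2 1 (by decide)
        rw [div_sub_div _ _ l1 l2]
        refine div_ne_zero ?_ (mul_ne_zero l1 l2)
        simpa using this
      have q3 : p * (a * b * c * d) * (W l / S l * (1 / l 1 - 1 / l 2)) = 0 := by
        linear_combination 4 * q1' - 4 * q2'
      have q4 := (mul_eq_zero.1 q3).resolve_right (mul_ne_zero (div_ne_zero hw hs) hd)
      refine ⟨q4, ?_⟩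
      rw [q4] at q1'
      linear_combination -4 * q1'
    · rintro ⟨h1, h2⟩ i j k hij hjk hik l hl
      rw [main i j k hij hjk hik l hl, h1, h2]
      ring
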